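/- Let Γ be a countable sofic group and a ∈ M_n(ℚ̄Γ). Then the von Neumann dimension dim_{τ_Γ}(ker j(a)) of the kernel of j(a), computed with respect to the canonical trace τ_Γ of Γ, is the same for all field embeddings j : ℚ̄ → ℂ. -/

import Mathlib

open scoped ComplexOrder ENNReal
open Filter Topology Matrix

set_option synthInstance.maxHeartbeats 1000000
set_option maxHeartbeats 1000000

noncomputable section

instance piLpCompleteSpace {ι : Type*} [Fintype ι] (p : ℝ≥0∞) (β : ι → Type*)
    [∀ i, UniformSpace (β i)] [∀ i, CompleteSpace (β i)] : CompleteSpace (PiLp p β) :=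
  PiLp.completeSpace p β

/-- `φ : G → ℂ` is of positive type: for every finite family `g₁, …, g_m` of elements of
`G`, the matrix `(φ (gᵢ⁻¹ gⱼ))_{i,j}` is positive semidefinite. -/
def IsPosType {G : Type*} [Group G] (φ : G → ℂ) : Prop :=
  ∀ (m : ℕ) (g : Fin m → G), (Matrix.of fun i j => φ ((g i)⁻¹ * g j)).PosSemidef

/-- A trace on a (discrete) group: a function of positive type, constant on conjugacy
classes. -/
def IsGroupTrace {G : Type*} [Group G] (φ : G → ℂ) : Prop :=
  IsPosType φ ∧ ∀ g h : G, φ (h * g * h⁻¹) = φ g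

/-- GNS representation data for a function `φ` on a group `G`: a Hilbert space `H`, a
unital algebra morphism `π` from `ℂG = MonoidAlgebra ℂ G` to the bounded operators on `H`
sending group elements to unitaries (this is the condition `star_of`), and a cyclic vector
`ξ` whose matrix coefficient is (the linear extension of) `φ`. -/
structure GNSRep (G : Type*) [Group G] (φ : G → ℂ) where
  H : Type
  [instNormed : NormedAddCommGroup H]
  [instInner : InnerProductSpace ℂ H]
  [instComplete : CompleteSpace H]
  π : MonoidAlgebra ℂ G →ₐ[ℂ] (H →L[ℂ] H)
  ξ : H
  star_of : ∀ g : G, star (π (MonoidAlgebra.of ℂ G g)) = π (MonoidAlgebra.of ℂ G g⁻¹)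
  inner_eq : ∀ g : G, (inner ℂ ξ (π (MonoidAlgebra.of ℂ G g) ξ) : ℂ) = φ g
  cyclic : Dense (Set.range fun x : MonoidAlgebra ℂ G => π x ξ)

attribute [instance] GNSRep.instNormed GNSRep.instInner GNSRep.instComplete

/-- The vector `ξᵢ ∈ Hⁿ`: the cyclic vector `ξ` in the `i`-th summand, `0` elsewhere. -/
def GNSRep.vec {G : Type*} [Group G] {φ : G → ℂ} (R : GNSRep G φ) {n : ℕ} (i : Fin n) :
    PiLp 2 (fun _ : Fin n => R.H) :=
  (PiLp.continuousLinearEquiv 2 ℂ (fun _ : Fin n => R.H)).symm (Pi.single i R.ξ)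

/-- `|x| = (x* x)^{1/2}`, via the continuous functional calculus. -/
def cfcAbs {A : Type*} [CStarAlgebra A] (x : A) : A := cfc Real.sqrt (star x * x)

/-- The set of continuous majorants of `ln₊` on `[0,∞)`.  (Recall that `Real.log 0 = 0`,
so that `Real.log` agrees with `ln₊` on `[0,∞)`.) -/
def lnPlusMajorants : Set (ℝ → ℝ) :=
  {g | ContinuousOn g (Set.Ici 0) ∧ ∀ t ∈ Set.Ici (0:ℝ), Real.log t ≤ g t}

/-- The action of a matrix `a ∈ Mₙ(R)` on the Hilbert space `H'ⁿ` (with its `ℓ²` inner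
product) induced by a morphism `π : R → B(H')`: `(π_n(a) v)_i = Σ_j π(a i j) (v j)`. -/
def matAct {R H' : Type*} [Ring R] [Algebra ℂ R] [NormedAddCommGroup H']
    [InnerProductSpace ℂ H'] {n : ℕ}
    (π : R →ₐ[ℂ] (H' →L[ℂ] H')) (a : Matrix (Fin n) (Fin n) R) :
    PiLp 2 (fun _ : Fin n => H') →L[ℂ] PiLp 2 (fun _ : Fin n => H') :=
  (PiLp.continuousLinearEquiv 2 ℂ _).symm.toContinuousLinearMap ∘L
    (ContinuousLinearMap.pi fun i => ∑ j, (π (a i j)).comp (ContinuousLinearMap.proj j)) ∘L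
    (PiLp.continuousLinearEquiv 2 ℂ _).toContinuousLinearMap

/-- `(φ ⊗ Trₙ)(ln₊ |a|) := inf { Σᵢ ⟨ξᵢ, g(|π(a)|) ξᵢ⟩ : g : [0,∞) → ℝ continuous, g ≥ ln₊ }`,
an element of `ℝ ∪ {−∞}`, computed in the GNS representation `R`. -/
def GNSRep.lnPlusQ {G : Type*} [Group G] {φ : G → ℂ} (R : GNSRep G φ) {n : ℕ}
    (a : Matrix (Fin n) (Fin n) (MonoidAlgebra ℂ G)) : EReal :=
  ⨅ g ∈ lnPlusMajorants,
    ((∑ i, (inner ℂ (R.vec i) (cfc g (cfcAbs (matAct R.π a)) (R.vec i)) : ℂ)).re : EReal)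

/-- A function `φ` on `G` satisfies Lück's condition if `(φ ⊗ Trₙ)(ln₊|a|) ≥ 0` for every
`n ≥ 1` and every `a ∈ Mₙ(ℤG)` (an `a ∈ Mₙ(ℂG)` whose coefficients are all integers),
where the quantity is computed in any GNS representation of `φ`. -/
def SatisfiesLueck {G : Type*} [Group G] (φ : G → ℂ) : Prop :=
  ∀ (n : ℕ), 0 < n → ∀ a : Matrix (Fin n) (Fin n) (MonoidAlgebra ℂ G),
    (∀ (i j : Fin n) (g : G), ∃ m : ℤ, (a i j).coeff g = (m : ℂ)) →
    ∀ R : GNSRep G φ, 0 ≤ R.lnPlusQ a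

/-- `dim_φ(ker a) := inf { Σᵢ ⟨ξᵢ, h(|π(a)|) ξᵢ⟩ : h : [0,∞) → [0,1] continuous, h 0 = 1 }`,
the von Neumann dimension of the kernel of `a`, computed in the GNS representation `R`. -/
def GNSRep.kerDim {G : Type*} [Group G] {φ : G → ℂ} (R : GNSRep G φ) {n : ℕ}
    (a : Matrix (Fin n) (Fin n) (MonoidAlgebra ℂ G)) : ℝ :=
  sInf {r : ℝ | ∃ h : ℝ → ℝ, ContinuousOn h (Set.Ici 0) ∧
    (∀ t ∈ Set.Ici (0:ℝ), h t ∈ Set.Icc (0:ℝ) 1) ∧ h 0 = 1 ∧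
    r = (∑ i, (inner ℂ (R.vec i) (cfc h (cfcAbs (matAct R.π a)) (R.vec i)) : ℂ)).re}

/-- `τ_k(σ) = card {x | σ x = x} / k`, the fixed-point ratio of a permutation. -/
def permFixRatio {k : ℕ} (σ : Equiv.Perm (Fin k)) : ℝ :=
  (Finset.univ.filter fun x => σ x = x).card / k

/-- `δ_k(σ₁, σ₂) = card {x | σ₁ x ≠ σ₂ x} / k`, the normalized Hamming distance. -/
def permHamming {k : ℕ} (σ₁ σ₂ : Equiv.Perm (Fin k)) : ℝ :=
  (Finset.univ.filter fun x => σ₁ x ≠ σ₂ x).card / k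

/-- A group `Γ` is sofic: there are maps `f_n : Γ → S_{k_n}` (not necessarily
homomorphisms) which are asymptotically multiplicative and asymptotically free. -/
def IsSofic (Γ : Type*) [Group Γ] : Prop :=
  ∃ (k : ℕ → ℕ) (f : ∀ n, Γ → Equiv.Perm (Fin (k n))),
    (∀ n, 0 < k n) ∧
    (∀ x y : Γ, Tendsto (fun n => permHamming (f n x * f n y) (f n (x * y))) atTop (𝓝 0)) ∧
    (∀ x : Γ, x ≠ 1 → Tendsto (fun n => permHamming (f n x) 1) atTop (𝓝 1))

open Classical in
/-- The canonical trace on a group: `τ_Γ(x) = 1` if `x = 1` and `0` otherwise. -/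
def canonicalTrace (Γ : Type*) [Group Γ] : Γ → ℂ := fun x => if x = 1 then 1 else 0

/-- Apply a field embedding `j : ℚ̄ → ℂ` coefficientwise to a matrix over the group ring
`ℚ̄G`, where `ℚ̄ = AlgebraicClosure ℚ` is the field of algebraic numbers. -/
def mapCoeffs {n : ℕ} {G : Type*} [Group G] (j : AlgebraicClosure ℚ →+* ℂ)
    (a : Matrix (Fin n) (Fin n) (MonoidAlgebra (AlgebraicClosure ℚ) G)) :
    Matrix (Fin n) (Fin n) (MonoidAlgebra ℂ G) :=
  fun i i' => MonoidAlgebra.ofCoeff (Finsupp.mapRange j j.map_zero (a i i').coeff)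

/-!
This is Lück approximation over a sofic approximation `f` of `Γ`. Replacing each group element `g`
by the permutation matrix of `f m g` turns `a` into finite matrices `Aₘ`. Asymptotically, this is
a `*`-homomorphism carrying the normalized trace to `τ_Γ`, so the moments of the eigenvalue
distributions of `Aₘᴴ Aₘ`, normalized by `k m`, converge to those of `a* a`, and hence the
distributions converge weakly. Weak convergence may lose mass at `0`. If the coefficients of `a`
are algebraic integers, the product of the nonzero eigenvalues of `Aₘᴴ Aₘ` is the absolute value
of a nonzero algebraic integer, whose conjugates are bounded exponentially in `k m`. So that product
is not smaller than exponential, and few nonzero eigenvalues can lie close to `0`. Therefore the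
normalized nullity of `Aₘ` converges to the von Neumann dimension of the kernel of `a`. For
algebraic coefficients the denominators can be cleared, and the rank of `Aₘ` does not depend on the
embedding of the coefficients.
-/

namespace LueckApproximation

section Operators

variable {S H : Type*} [Ring S] [Algebra ℂ S] [NormedAddCommGroup H] [InnerProductSpace ℂ H]
  {n : ℕ}

lemma matAct_apply (π : S →ₐ[ℂ] (H →L[ℂ] H)) (a : Matrix (Fin n) (Fin n) S)
    (v : PiLp 2 fun _ : Fin n => H) (i : Fin n) : matAct π a v i = ∑ j, π (a i j) (v j) := by
  simp [matAct]

/-- The action `matAct` of `Mₙ(S)` on `Hⁿ`, bundled as an algebra homomorphism. -/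
def matActHom (π : S →ₐ[ℂ] (H →L[ℂ] H)) :
    Matrix (Fin n) (Fin n) S →ₐ[ℂ]
      ((PiLp 2 fun _ : Fin n => H) →L[ℂ] PiLp 2 fun _ : Fin n => H) where
  toFun := matAct π
  map_one' := by
    ext v i
    simp [matAct_apply, Matrix.one_apply, apply_ite π,
      apply_ite (DFunLike.coe (F := H →L[ℂ] H)), ite_apply]
  map_mul' a b := by
    ext v i
    simp only [mul_apply_eq_comp, matAct_apply, Matrix.mul_apply, map_sum, map_mul,
      _root_.sum_apply]
    rw [Finset.sum_comm]
  map_zero' := by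
    ext v i
    simp [matAct_apply]
  map_add' a b := by
    ext v i
    simp [matAct_apply, Finset.sum_add_distrib]
  commutes' c := by
    ext v i
    simp [matAct_apply, Matrix.algebraMap_matrix_apply, apply_ite π,
      apply_ite (DFunLike.coe (F := H →L[ℂ] H)), ite_apply]

lemma matAct_pow (π : S →ₐ[ℂ] (H →L[ℂ] H)) (a : Matrix (Fin n) (Fin n) S) (l : ℕ) :
    matAct π (a ^ l) = matAct π a ^ l :=
  map_pow (matActHom π) a l

lemma matAct_mul (π : S →ₐ[ℂ] (H →L[ℂ] H)) (a b : Matrix (Fin n) (Fin n) S) :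
    matAct π (a * b) = matAct π a * matAct π b :=
  map_mul (matActHom π) a b

lemma matAct_smul (π : S →ₐ[ℂ] (H →L[ℂ] H)) (c : ℂ) (a : Matrix (Fin n) (Fin n) S) :
    matAct π (c • a) = c • matAct π a :=
  map_smul (matActHom π) c a

lemma star_matAct [CompleteSpace H] (π : S →ₐ[ℂ] (H →L[ℂ] H)) {a b : Matrix (Fin n) (Fin n) S}
    (h : ∀ i j, π (b i j) = star (π (a j i))) : star (matAct π a) = matAct π b := by
  rw [ContinuousLinearMap.star_eq_adjoint, eq_comm, ContinuousLinearMap.eq_adjoint_iff]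
  intro x y
  simp only [PiLp.inner_apply, matAct_apply, sum_inner, inner_sum, h,
    ContinuousLinearMap.star_eq_adjoint, ContinuousLinearMap.adjoint_inner_left]
  exact Finset.sum_comm

lemma cfc_cfcAbs {A : Type*} [CStarAlgebra A] [PartialOrder A] [StarOrderedRing A] (x : A)
    {h : ℝ → ℝ} (hh : ContinuousOn h (Set.Ici 0)) :
    cfc h (cfcAbs x) = cfc (fun t => h √t) (star x * x) := by
  refine (cfc_comp' h Real.sqrt (star x * x) (hh.mono ?_)).symm
  rintro _ ⟨t, -, rfl⟩
  exact Real.sqrt_nonneg t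

lemma cfc_star_smul_mul_smul {A : Type*} [CStarAlgebra A] [PartialOrder A] [StarOrderedRing A]
    (x : A) (c : ℂ) {h : ℝ → ℝ} (hh : ContinuousOn h (Set.Ici 0)) :
    cfc h (star (c • x) * (c • x)) = cfc (fun t => h (‖c‖ ^ 2 * t)) (star x * x) := by
  have hscale : star (c • x) * (c • x) = (‖c‖ ^ 2 : ℝ) • (star x * x) := by
    rw [star_smul, smul_mul_smul_comm, ← Complex.coe_smul]
    simp [Complex.conj_mul']
  rw [hscale]
  refine (cfc_comp_smul (‖c‖ ^ 2) h (star x * x) (hh.mono ?_)).symm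
  rintro _ ⟨t, ht, rfl⟩
  exact mul_nonneg (sq_nonneg _) (spectrum_nonneg_of_nonneg (star_mul_self_nonneg x) ht)

end Operators

section KernelDimension

/-- The continuous test functions `h : [0, ∞) → [0, 1]` with `h 0 = 1` over which the infimum
defining `GNSRep.kerDim` is taken. -/
def kernelTests : Set (ℝ → ℝ) :=
  {h | ContinuousOn h (Set.Ici 0) ∧ (∀ t ∈ Set.Ici (0 : ℝ), h t ∈ Set.Icc (0 : ℝ) 1) ∧ h 0 = 1}

lemma comp_mem_kernelTests {h u : ℝ → ℝ} (hh : h ∈ kernelTests) (hu : ContinuousOn u (Set.Ici 0))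
    (hu_nonneg : ∀ t ∈ Set.Ici (0 : ℝ), 0 ≤ u t) (hu_zero : u 0 = 0) :
    (fun t => h (u t)) ∈ kernelTests :=
  ⟨hh.1.comp hu hu_nonneg, fun t ht => hh.2.1 _ (hu_nonneg t ht), by simp only [hu_zero, hh.2.2]⟩

variable {Γ : Type*} [Group Γ] {φ : Γ → ℂ} (R : GNSRep Γ φ) {n : ℕ}

/-- The real part of the functional `T ↦ Σᵢ ⟨ξᵢ, T ξᵢ⟩` on the bounded operators of `Hⁿ`; on
the image of `Mₙ(ℂΓ)` it is the real part of `φ ⊗ Trₙ`. -/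
def reTrace : ((PiLp 2 fun _ : Fin n => R.H) →L[ℂ] PiLp 2 fun _ : Fin n => R.H) →L[ℝ] ℝ :=
  Complex.reCLM ∘L ∑ i, ((innerSL ℂ (R.vec i)).restrictScalars ℝ ∘L
    (ContinuousLinearMap.apply ℂ (PiLp 2 fun _ : Fin n => R.H) (R.vec i)).restrictScalars ℝ)

lemma reTrace_apply (T : (PiLp 2 fun _ : Fin n => R.H) →L[ℂ] PiLp 2 fun _ : Fin n => R.H) :
    reTrace R T = (∑ i, inner ℂ (R.vec i) (T (R.vec i))).re := by
  simp [reTrace]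

lemma kerDim_eq_sInf (a : Matrix (Fin n) (Fin n) (MonoidAlgebra ℂ Γ)) :
    R.kerDim a = sInf ((fun h => reTrace R (cfc h (star (matAct R.π a) * matAct R.π a))) ''
      kernelTests) := by
  unfold GNSRep.kerDim
  congr 1
  ext r
  constructor
  · rintro ⟨h, hc, h01, h0, rfl⟩
    refine ⟨fun t => h √t, comp_mem_kernelTests ⟨hc, h01, h0⟩ Real.continuous_sqrt.continuousOn
      (fun t _ => Real.sqrt_nonneg t) Real.sqrt_zero, ?_⟩
    rw [cfc_cfcAbs _ hc, ← reTrace_apply]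
  · rintro ⟨h, hh, rfl⟩
    obtain ⟨hc, h01, h0⟩ := comp_mem_kernelTests hh (u := (· ^ 2)) (by fun_prop)
      (fun t _ => sq_nonneg t) (by simp)
    refine ⟨fun t => h (t ^ 2), hc, h01, h0, ?_⟩
    dsimp only
    rw [cfc_cfcAbs _ hc, ← reTrace_apply]
    congr 1
    refine cfc_congr fun t ht => ?_
    simp only [Real.sq_sqrt (spectrum_nonneg_of_nonneg (star_mul_self_nonneg _) ht)]

lemma image_kernelTests_smul_subset (a : Matrix (Fin n) (Fin n) (MonoidAlgebra ℂ Γ)) (c : ℂ) :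
    (fun h => reTrace R (cfc h (star (matAct R.π (c • a)) * matAct R.π (c • a)))) '' kernelTests ⊆
      (fun h => reTrace R (cfc h (star (matAct R.π a) * matAct R.π a))) '' kernelTests := by
  rintro _ ⟨h, hh, rfl⟩
  refine ⟨fun t => h (‖c‖ ^ 2 * t), comp_mem_kernelTests hh (by fun_prop)
    (fun t ht => mul_nonneg (sq_nonneg _) ht) (mul_zero _), ?_⟩
  simp only [matAct_smul, cfc_star_smul_mul_smul _ _ hh.1]

lemma kerDim_smul (a : Matrix (Fin n) (Fin n) (MonoidAlgebra ℂ Γ)) {c : ℂ} (hc : c ≠ 0) :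
    R.kerDim (c • a) = R.kerDim a := by
  rw [kerDim_eq_sInf, kerDim_eq_sInf]
  refine congrArg sInf (subset_antisymm (image_kernelTests_smul_subset R a c) ?_)
  simpa only [inv_smul_smul₀ hc] using image_kernelTests_smul_subset R (c • a) c⁻¹

end KernelDimension

section WeakConvergence

lemma tendsto_sum_eval_div {A : Type*} [CStarAlgebra A] (L : A →L[ℝ] ℝ) (T : A)
    {ι : ℕ → Type*} [∀ m, Fintype (ι m)] {x : ∀ m, ι m → ℝ} {k : ℕ → ℝ}
    (hx : ∀ l : ℕ, Tendsto (fun m => (∑ i, x m i ^ l) / k m) atTop (𝓝 (L (T ^ l))))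
    (p : Polynomial ℝ) :
    Tendsto (fun m => (∑ i, p.eval (x m i)) / k m) atTop (𝓝 (L (Polynomial.aeval T p))) := by
  induction p using Polynomial.induction_on' with
  | add p q hp hq => simpa [Finset.sum_add_distrib, add_div] using hp.add hq
  | monomial l r =>
    simpa [← Finset.mul_sum, mul_div_assoc, ← Algebra.smul_def] using (hx l).const_mul r

lemma abs_sum_sub_sum_div_le {ι : Type*} [Fintype ι] {k C δ : ℝ} (hk : 0 < k)
    (hcard : Fintype.card ι ≤ C * k) (hδ : 0 ≤ δ) {u v : ι → ℝ} (huv : ∀ i, |u i - v i| ≤ δ) :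
    |(∑ i, u i) / k - (∑ i, v i) / k| ≤ C * δ := by
  rw [← sub_div, ← Finset.sum_sub_distrib, abs_div, abs_of_pos hk, div_le_iff₀ hk]
  calc |∑ i, (u i - v i)| ≤ Fintype.card ι * δ := by
        simpa using (Finset.abs_sum_le_sum_abs _ _).trans
          (Finset.sum_le_card_nsmul Finset.univ _ δ fun i _ => huv i)
    _ ≤ C * k * δ := by gcongr
    _ = C * δ * k := by ring

lemma tendsto_sum_div_cfc {A : Type*} [CStarAlgebra A] (L : A →L[ℝ] ℝ) {T : A}
    (hT : IsSelfAdjoint T) {a b : ℝ} (hspec : spectrum ℝ T ⊆ Set.Icc a b)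
    {ι : ℕ → Type*} [∀ m, Fintype (ι m)] {x : ∀ m, ι m → ℝ} (hxab : ∀ m i, x m i ∈ Set.Icc a b)
    {k : ℕ → ℝ} (hk : ∀ m, 0 < k m) {C : ℝ} (hcard : ∀ m, Fintype.card (ι m) ≤ C * k m)
    (hx : ∀ l : ℕ, Tendsto (fun m => (∑ i, x m i ^ l) / k m) atTop (𝓝 (L (T ^ l))))
    {h : ℝ → ℝ} (hh : ContinuousOn h (Set.Icc a b)) :
    Tendsto (fun m => (∑ i, h (x m i)) / k m) atTop (𝓝 (L (cfc h T))) := by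
  have hC : 0 ≤ C := nonneg_of_mul_nonneg_left ((Nat.cast_nonneg _).trans (hcard 0)) (hk 0)
  rw [Metric.tendsto_atTop]
  intro ε hε
  set δ := ε / (C + ‖L‖ + 1)
  have hδ : 0 < δ := by positivity
  obtain ⟨p, hp⟩ := exists_polynomial_near_of_continuousOn a b h hh δ hδ
  have hsum (m : ℕ) : |(∑ i, h (x m i)) / k m - (∑ i, p.eval (x m i)) / k m| ≤ C * δ :=
    abs_sum_sub_sum_div_le (hk m) (hcard m) hδ.le fun i => by
      rw [abs_sub_comm]
      exact (hp _ (hxab m i)).le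
  have hop : |L (Polynomial.aeval T p) - L (cfc h T)| ≤ ‖L‖ * δ := by
    have hcfc : ‖cfc (fun t => p.eval t) T - cfc h T‖ ≤ δ := by
      rw [← cfc_sub _ _ T p.continuous.continuousOn (hh.mono hspec)]
      exact norm_cfc_le hδ.le fun t ht => (hp t (hspec ht)).le
    rw [← cfc_polynomial p T, ← map_sub]
    exact (L.le_opNorm _).trans (mul_le_mul_of_nonneg_left hcfc (norm_nonneg _))
  obtain ⟨N, hN⟩ := Metric.tendsto_atTop.1 (tendsto_sum_eval_div L T hx p) δ hδ
  refine ⟨N, fun m hm => ?_⟩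
  calc |(∑ i, h (x m i)) / k m - L (cfc h T)|
      ≤ |(∑ i, h (x m i)) / k m - (∑ i, p.eval (x m i)) / k m|
        + |(∑ i, p.eval (x m i)) / k m - L (Polynomial.aeval T p)|
        + |L (Polynomial.aeval T p) - L (cfc h T)| :=
        (abs_sub_le _ _ _).trans (add_le_add_left (abs_sub_le _ _ _) _)
    _ < C * δ + δ + ‖L‖ * δ :=
        add_lt_add_of_lt_of_le (add_lt_add_of_le_of_lt (hsum m) (hN m hm)) hop
    _ = ε := by
        simp only [δ]
        field_simp
        ring

end WeakConvergence

section KernelConvergence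

lemma card_zero_le_sum {ι : Type*} [Fintype ι] {x : ι → ℝ} {h : ℝ → ℝ}
    (h_nonneg : ∀ i, 0 ≤ h (x i)) (h_zero : h 0 = 1) :
    (Finset.card {i | x i = 0} : ℝ) ≤ ∑ i, h (x i) := by
  rw [Finset.natCast_card_filter]
  refine Finset.sum_le_sum fun i _ => ?_
  split_ifs with hi
  · rw [hi, h_zero]
  · exact h_nonneg i

/-- The piecewise linear function on `[0, ∞)` that is `1` at `0` and vanishes on `[ε, ∞)`. -/
def tent (ε t : ℝ) : ℝ := max 0 (1 - t / ε)

lemma tent_mem_kernelTests {ε : ℝ} (hε : 0 < ε) : tent ε ∈ kernelTests :=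
  ⟨by unfold tent; fun_prop, fun _ ht =>
    ⟨le_max_left _ _, max_le zero_le_one (sub_le_self _ (div_nonneg ht hε.le))⟩, by simp [tent]⟩

lemma sum_tent_le {ι : Type*} [Fintype ι] {x : ι → ℝ} (hx : ∀ i, 0 ≤ x i) {ε : ℝ} (hε : 0 < ε) :
    ∑ i, tent ε (x i) ≤
      (Finset.card {i | x i = 0} : ℝ) + Finset.card {i | x i ≠ 0 ∧ x i < ε} := by
  rw [Finset.natCast_card_filter, Finset.natCast_card_filter, ← Finset.sum_add_distrib]
  refine Finset.sum_le_sum fun i _ => ?_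
  unfold tent
  by_cases h0 : x i = 0
  · simp [h0]
  by_cases hlt : x i < ε
  · simp [h0, hlt, div_nonneg (hx i) hε.le]
  · simp [h0, hlt, one_le_div hε, not_lt.1 hlt]

lemma tendsto_card_zero_div {ι : ℕ → Type*} [∀ m, Fintype (ι m)] {x : ∀ m, ι m → ℝ} {k : ℕ → ℝ}
    (hx : ∀ m i, 0 ≤ x m i) (hk : ∀ m, 0 < k m)
    {Λ : (ℝ → ℝ) → ℝ} (hΛ : ∀ h : ℝ → ℝ, ContinuousOn h (Set.Ici 0) →
      Tendsto (fun m => (∑ i, h (x m i)) / k m) atTop (𝓝 (Λ h)))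
    (hsmall : ∀ δ > 0, ∃ ε > 0, ∀ m, (Finset.card {i | x m i ≠ 0 ∧ x m i < ε} : ℝ) ≤ δ * k m) :
    Tendsto (fun m => (Finset.card {i | x m i = 0} : ℝ) / k m) atTop
      (𝓝 (sInf (Λ '' kernelTests))) := by
  have hbdd : BddBelow (Λ '' kernelTests) := by
    refine ⟨0, ?_⟩
    rintro _ ⟨h, hh, rfl⟩
    exact ge_of_tendsto' (hΛ h hh.1) fun m =>
      div_nonneg (Finset.sum_nonneg fun i _ => (hh.2.1 _ (hx m i)).1) (hk m).le
  have hne : (Λ '' kernelTests).Nonempty := ⟨_, tent 1, tent_mem_kernelTests one_pos, rfl⟩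
  refine tendsto_order.2 ⟨fun r hr => ?_, fun r hr => ?_⟩
  · obtain ⟨ε, hε, hcard⟩ := hsmall ((sInf (Λ '' kernelTests) - r) / 2) (by linarith)
    have htent := tent_mem_kernelTests hε
    have hle : sInf (Λ '' kernelTests) ≤ Λ (tent ε) := csInf_le hbdd ⟨_, htent, rfl⟩
    filter_upwards [(hΛ _ htent.1).eventually_const_lt
      (show (sInf (Λ '' kernelTests) + r) / 2 < Λ (tent ε) by linarith)] with m hm
    rw [lt_div_iff₀ (hk m)] at hm ⊢
    linarith [sum_tent_le (hx m) hε, hcard m]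
  · obtain ⟨_, ⟨h, hh, rfl⟩, hlt⟩ := exists_lt_of_csInf_lt hne hr
    filter_upwards [(hΛ h hh.1).eventually_lt_const hlt] with m hm
    refine lt_of_le_of_lt ?_ hm
    exact div_le_div_of_nonneg_right
      (card_zero_le_sum (fun i => (hh.2.1 _ (hx m i)).1) hh.2.2) (hk m).le

end KernelConvergence

section SmallEigenvalues

open scoped NumberField

attribute [local instance] Matrix.linftyOpNormedRing Matrix.linftyOpNormedAlgebra

lemma one_le_norm_mul_pow_finrank {E : Type*} [Field E] [NumberField E] (J : E →+* ℂ)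
    {x : 𝓞 E} (hx : x ≠ 0) {Q : ℝ} (hQ : 1 ≤ Q)
    (hxQ : ∀ σ : E →+* ℂ, ‖σ x‖ ≤ Q) : 1 ≤ ‖J x‖ * Q ^ Module.finrank ℚ E := by
  classical
  have hnorm : 1 ≤ ∏ σ : E →ₐ[ℚ] ℂ, ‖σ x‖ := by
    rw [← norm_prod, ← Algebra.norm_eq_prod_embeddings, ← Algebra.coe_norm_int]
    simp only [map_intCast, Complex.norm_intCast]
    exact_mod_cast Int.one_le_abs (Algebra.norm_ne_zero_iff.2 hx)
  rw [← Finset.mul_prod_erase Finset.univ _ (Finset.mem_univ J.toRatAlgHom)] at hnorm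
  refine hnorm.trans (mul_le_mul_of_nonneg_left ?_ (norm_nonneg _))
  calc ∏ σ ∈ Finset.univ.erase J.toRatAlgHom, ‖σ x‖
      ≤ ∏ _σ ∈ Finset.univ.erase J.toRatAlgHom, Q :=
        Finset.prod_le_prod (fun _ _ => norm_nonneg _) fun σ _ => hxQ σ
    _ = Q ^ (Finset.univ.erase J.toRatAlgHom).card := Finset.prod_const Q
    _ ≤ Q ^ Module.finrank ℚ E :=
        pow_le_pow_right₀ hQ ((Finset.card_le_univ _).trans_eq (AlgHom.card ℚ E ℂ))

variable {ι : Type*} [Fintype ι]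

lemma card_small_mul_neg_log_le {x : ι → ℝ} {M Q : ℝ} (hM : 1 ≤ M) (hx : ∀ i, |x i| ≤ M)
    (hQ : 0 < Q) (hprod : 1 ≤ (∏ i with x i ≠ 0, |x i|) * Q) {ε : ℝ} (hε : 0 < ε) :
    (Finset.card {i | x i ≠ 0 ∧ |x i| < ε} : ℝ) * -Real.log ε ≤
      Real.log Q + Fintype.card ι * Real.log M := by
  set s := Finset.card {i | x i ≠ 0 ∧ |x i| < ε}
  have hsmall : ∏ i with x i ≠ 0 ∧ |x i| < ε, |x i| ≤ ε ^ s :=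
    (Finset.prod_le_prod (fun _ _ => abs_nonneg _)
      fun i hi => (Finset.mem_filter.1 hi).2.2.le).trans_eq (Finset.prod_const ε)
  have hlarge : ∏ i with x i ≠ 0 ∧ ¬|x i| < ε, |x i| ≤ M ^ Fintype.card ι :=
    (Finset.prod_le_prod (fun _ _ => abs_nonneg _) fun i _ => hx i).trans <|
      (Finset.prod_const M).trans_le (pow_le_pow_right₀ hM (Finset.card_le_univ _))
  have hle : 1 ≤ ε ^ s * M ^ Fintype.card ι * Q := by
    refine hprod.trans (mul_le_mul_of_nonneg_right ?_ hQ.le)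
    rw [← Finset.prod_filter_mul_prod_filter_not _ (fun i => |x i| < ε), Finset.filter_filter,
      Finset.filter_filter]
    exact mul_le_mul hsmall hlarge (Finset.prod_nonneg fun _ _ => abs_nonneg _) (by positivity)
  have hlog := Real.log_nonneg hle
  rw [Real.log_mul (by positivity) hQ.ne', Real.log_mul (by positivity) (by positivity),
    Real.log_pow, Real.log_pow] at hlog
  linarith

variable [DecidableEq ι]

lemma norm_le_linftyOpNorm_of_mem_spectrum {𝕜 : Type*} [RCLike 𝕜] {B : Matrix ι ι 𝕜} {z : 𝕜}
    (hz : z ∈ spectrum 𝕜 B) : ‖z‖ ≤ ‖B‖ := by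
  cases isEmpty_or_nonempty ι
  · exact absurd hz (by simp [spectrum.of_subsingleton])
  · simpa using spectrum.norm_le_norm_of_mem hz

lemma abs_eigenvalues_le_linftyOpNorm {B : Matrix ι ι ℂ} (hB : B.IsHermitian) (i : ι) :
    |hB.eigenvalues i| ≤ ‖B‖ := by
  have hmem : (hB.eigenvalues i : ℂ) ∈ spectrum ℂ B := by
    rw [hB.spectrum_eq_image_range]
    exact ⟨_, ⟨i, rfl⟩, rfl⟩
  simpa using norm_le_linftyOpNorm_of_mem_spectrum hmem

lemma norm_coeff_charpoly_le (B : Matrix ι ι ℂ) {M : ℝ} (hM : 1 ≤ M) (hB : ‖B‖ ≤ M) (l : ℕ) :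
    ‖B.charpoly.coeff l‖ ≤ (2 * M) ^ Fintype.card ι := by
  have hcoeff := Polynomial.coeff_bdd_of_roots_le (RingHom.id ℂ) B.charpoly_monic
    (IsAlgClosed.splits _) B.charpoly_natDegree_eq_dim.le (B := M) (fun z hz => by
      rw [Polynomial.map_id] at hz
      exact (norm_le_linftyOpNorm_of_mem_spectrum
        (Matrix.mem_spectrum_iff_isRoot_charpoly.2 (Polynomial.isRoot_of_mem_roots hz))).trans hB) l
  rw [Polynomial.map_id, max_eq_left hM] at hcoeff
  refine hcoeff.trans ?_
  rw [mul_pow, mul_comm]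
  gcongr
  exact_mod_cast Nat.choose_le_two_pow _ _

lemma norm_trailingCoeff_charpoly {B : Matrix ι ι ℂ} (hB : B.IsHermitian) :
    ‖B.charpoly.trailingCoeff‖ = ∏ i with hB.eigenvalues i ≠ 0, |hB.eigenvalues i| := by
  let trailing : Polynomial ℂ →* ℂ :=
    { toFun := Polynomial.trailingCoeff
      map_one' := by simp [Polynomial.trailingCoeff]
      map_mul' := Polynomial.trailingCoeff_mul }
  have hlin (r : ℝ) : ‖(Polynomial.X - Polynomial.C (r : ℂ)).trailingCoeff‖ =
      if r ≠ 0 then |r| else 1 := by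
    split_ifs with hr
    · rw [Polynomial.trailingCoeff_eq_coeff_zero] <;> simp [hr]
    · simp [not_not.1 hr, Polynomial.trailingCoeff]
  rw [Finset.prod_filter, hB.charpoly_eq]
  exact ((map_prod trailing _ _).symm ▸ norm_prod _ _ :
    ‖trailing (∏ i, (Polynomial.X - Polynomial.C (hB.eigenvalues i : ℂ)))‖ = _).trans
    (Finset.prod_congr rfl fun i _ => hlin _)

-- The trailing coefficient of the characteristic polynomial is a nonzero algebraic integer.
lemma one_le_prod_abs_eigenvalues_mul {E : Type*} [Field E] [NumberField E] (J : E →+* ℂ)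
    (B : Matrix ι ι (𝓞 E)) (hB : (B.map (J.comp (algebraMap (𝓞 E) E))).IsHermitian) {M : ℝ}
    (hM : 1 ≤ M) (hBM : ∀ σ : E →+* ℂ, ‖B.map (σ.comp (algebraMap (𝓞 E) E))‖ ≤ M) :
    1 ≤ (∏ i with hB.eigenvalues i ≠ 0, |hB.eigenvalues i|) *
      ((2 * M) ^ Fintype.card ι) ^ Module.finrank ℚ E := by
  set r := (B.map (J.comp (algebraMap (𝓞 E) E))).charpoly.natTrailingDegree
  have hcoeff (σ : 𝓞 E →+* ℂ) : σ (B.charpoly.coeff r) = (B.map σ).charpoly.coeff r := by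
    rw [Matrix.charpoly_map, Polynomial.coeff_map]
  have htrailing : J (B.charpoly.coeff r) = Polynomial.trailingCoeff _ :=
    hcoeff (J.comp (algebraMap (𝓞 E) E))
  rw [← norm_trailingCoeff_charpoly, ← htrailing]
  refine one_le_norm_mul_pow_finrank J (fun h => ?_) (one_le_pow₀ (by linarith)) fun σ => ?_
  · rw [h] at htrailing
    exact (Matrix.charpoly_monic _).ne_zero
      (Polynomial.trailingCoeff_eq_zero.1 (htrailing.symm.trans (by simp)))
  · exact (congrArg norm (hcoeff (σ.comp (algebraMap (𝓞 E) E)))).trans_le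
      (norm_coeff_charpoly_le _ hM (hBM σ) r)

end SmallEigenvalues

section BlockPermutation

open scoped Kronecker

variable {Γ ι κ : Type*}

lemma induction_map_single [Finite ι] {R : Type*} [Semiring R]
    {P : Matrix ι ι (MonoidAlgebra R Γ) → Prop} (a : Matrix ι ι (MonoidAlgebra R Γ))
    (zero : P 0) (add : ∀ a b, P a → P b → P (a + b))
    (map_single : ∀ (g : Γ) (A : Matrix ι ι R), P (A.map (MonoidAlgebra.single g))) : P a := by
  classical
  cases nonempty_fintype ι
  refine Matrix.induction_on' a zero add fun i j x => ?_
  induction x using MonoidAlgebra.induction_linear with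
  | zero => simpa using zero
  | add x y hx hy => simpa only [Matrix.single_add] using add _ _ hx hy
  | single g r =>
    convert map_single g (Matrix.single i j r)
    ext1 i' j'
    simp only [Matrix.single_apply, Matrix.map_apply, apply_ite (MonoidAlgebra.single g),
      MonoidAlgebra.single_zero]

lemma map_single_mul_map_single [Fintype ι] [Monoid Γ] {R : Type*} [Semiring R] (g h : Γ)
    (A B : Matrix ι ι R) :
    A.map (MonoidAlgebra.single g) * B.map (MonoidAlgebra.single h) =
      (A * B).map (MonoidAlgebra.single (g * h)) := by
  ext1 i j
  simp only [Matrix.mul_apply, Matrix.map_apply, MonoidAlgebra.single_mul_single]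
  exact (map_sum (MonoidAlgebra.singleAddHom (g * h)) _ _).symm

/-- The adjoint `(a*)ᵢⱼ = (aⱼᵢ)*` on matrices over a group ring, where `(Σ r_g g)*` is
`Σ star r_g g⁻¹`. -/
def groupAdjoint [Group Γ] {R : Type*} [CommSemiring R] [StarRing R] :
    Matrix ι ι (MonoidAlgebra R Γ) →+ Matrix ι ι (MonoidAlgebra R Γ) :=
  (MonoidAlgebra.liftNC
    (MonoidAlgebra.singleOneRingHom.comp (starRingEnd R) : R →+* MonoidAlgebra R Γ)
    fun g => MonoidAlgebra.single g⁻¹ 1).mapMatrix.comp (transposeAddEquiv ι ι _).toAddMonoidHom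

lemma groupAdjoint_map_single [Group Γ] {R : Type*} [CommSemiring R] [StarRing R] (g : Γ)
    (A : Matrix ι ι R) :
    groupAdjoint (A.map (MonoidAlgebra.single g)) = Aᴴ.map (MonoidAlgebra.single g⁻¹) := by
  ext1 i j
  simp [groupAdjoint, MonoidAlgebra.single_mul_single, starRingEnd_apply]

variable [Fintype κ] [DecidableEq κ]

/-- Given a map `f` (not necessarily multiplicative) from `Γ` to the permutations of `κ`, the
additive map `M_ι(R[Γ]) → M_{ι × κ}(R)` replacing each group element `g` by the permutation
matrix of `f g`. -/
def blockPerm {R : Type*} [CommSemiring R] (f : Γ → Equiv.Perm κ) :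
    Matrix ι ι (MonoidAlgebra R Γ) →+ Matrix (ι × κ) (ι × κ) R :=
  (compAddEquiv ι ι κ κ R).toAddMonoidHom.comp
    (MonoidAlgebra.liftNC (Matrix.scalar κ : R →+* Matrix κ κ R)
      fun g => permMatrixHom (f g)).mapMatrix

lemma blockPerm_map_single {R : Type*} [CommSemiring R] (f : Γ → Equiv.Perm κ) (g : Γ)
    (A : Matrix ι ι R) :
    blockPerm f (A.map (MonoidAlgebra.single g)) = A ⊗ₖ permMatrixHom (f g) := by
  ext ⟨i, u⟩ ⟨j, v⟩
  simp [blockPerm]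

lemma map_blockPerm [Finite ι] [Monoid Γ] {R S : Type*} [CommSemiring R]
    [CommSemiring S] (φ : R →+* S) (f : Γ → Equiv.Perm κ) (a : Matrix ι ι (MonoidAlgebra R Γ)) :
    (blockPerm f a).map φ = blockPerm f (a.map (MonoidAlgebra.mapRingHom Γ φ)) := by
  induction a using induction_map_single with
  | zero => simp
  | add a b ha hb => simp only [map_add, Matrix.map_add _ (map_add _), ha, hb]
  | map_single g A =>
    have hsingle : (A.map (MonoidAlgebra.single g)).map (MonoidAlgebra.mapRingHom Γ φ) =
        (A.map φ).map (MonoidAlgebra.single g) := by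
      ext1 i j
      simp
    rw [hsingle, blockPerm_map_single, blockPerm_map_single]
    ext ⟨i, u⟩ ⟨j, v⟩
    simp [apply_ite φ, PEquiv.toMatrix_apply]

end BlockPermutation

section EntrySum

attribute [local instance] Matrix.linftyOpNormedAddCommGroup

open scoped Kronecker

variable {ι κ : Type*} [Fintype ι] [Fintype κ]

/-- The sum of the absolute values of the entries of a matrix; divided by the size of the matrix,
it is the norm with respect to which the permutation matrices of a sofic approximation are
asymptotically multiplicative. -/
def entrySum (X : Matrix ι ι ℂ) : ℝ := ∑ i, ∑ j, ‖X i j‖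

lemma entrySum_nonneg (X : Matrix ι ι ℂ) : 0 ≤ entrySum X := by
  unfold entrySum
  positivity

lemma entrySum_add_le (X Y : Matrix ι ι ℂ) : entrySum (X + Y) ≤ entrySum X + entrySum Y := by
  simp only [entrySum, ← Finset.sum_add_distrib]
  gcongr
  exact norm_add_le _ _

lemma entrySum_transpose (X : Matrix ι ι ℂ) : entrySum Xᵀ = entrySum X :=
  Finset.sum_comm

lemma norm_trace_le_entrySum (X : Matrix ι ι ℂ) : ‖X.trace‖ ≤ entrySum X :=
  (norm_sum_le _ _).trans <| Finset.sum_le_sum fun i _ =>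
    Finset.single_le_sum (f := fun j => ‖X i j‖) (fun _ _ => norm_nonneg _) (Finset.mem_univ i)

lemma sum_norm_row_le_linftyOpNorm (X : Matrix ι ι ℂ) (i : ι) : ∑ j, ‖X i j‖ ≤ ‖X‖ := by
  rw [Matrix.linfty_opNorm_def]
  simpa only [NNReal.coe_sum, coe_nnnorm] using
    NNReal.coe_le_coe.2 (Finset.le_sup (f := fun i => ∑ j, ‖X i j‖₊) (Finset.mem_univ i))

lemma linftyOpNorm_le {X : Matrix ι ι ℂ} {M : ℝ} (hM : 0 ≤ M) (hX : ∀ i, ∑ j, ‖X i j‖ ≤ M) :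
    ‖X‖ ≤ M := by
  lift M to NNReal using hM
  rw [Matrix.linfty_opNorm_def, NNReal.coe_le_coe]
  refine Finset.sup_le fun i _ => ?_
  simpa only [← NNReal.coe_le_coe, NNReal.coe_sum, coe_nnnorm] using hX i

lemma entrySum_mul_le (X Y : Matrix ι ι ℂ) : entrySum (X * Y) ≤ entrySum X * ‖Y‖ := by
  simp only [entrySum, Finset.sum_mul]
  refine Finset.sum_le_sum fun i _ => ?_
  calc ∑ j, ‖(X * Y) i j‖ ≤ ∑ j, ∑ l, ‖X i l‖ * ‖Y l j‖ := by
        gcongr with j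
        rw [Matrix.mul_apply]
        exact norm_sum_le_of_le _ fun l _ => norm_mul_le _ _
    _ = ∑ l, ‖X i l‖ * ∑ j, ‖Y l j‖ := by
        rw [Finset.sum_comm]
        simp only [Finset.mul_sum]
    _ ≤ ∑ l, ‖X i l‖ * ‖Y‖ := by
        gcongr
        exact sum_norm_row_le_linftyOpNorm Y _

lemma entrySum_mul_le' (X Y : Matrix ι ι ℂ) : entrySum (X * Y) ≤ ‖Xᵀ‖ * entrySum Y := by
  rw [← entrySum_transpose, transpose_mul, ← entrySum_transpose Y, mul_comm]
  exact entrySum_mul_le _ _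

lemma entrySum_kronecker (A : Matrix ι ι ℂ) (B : Matrix κ κ ℂ) :
    entrySum (A ⊗ₖ B) = entrySum A * entrySum B := by
  simp only [entrySum, Fintype.sum_prod_type, Matrix.kroneckerMap_apply, norm_mul]
  simp_rw [Finset.sum_mul, Finset.mul_sum]
  exact Finset.sum_congr rfl fun i _ => Finset.sum_comm

variable [DecidableEq κ]

lemma permMatrixHom_apply (R : Type*) [CommSemiring R] (σ : Equiv.Perm κ) (i j : κ) :
    (permMatrixHom σ : Matrix κ κ R) i j = if i = σ j then 1 else 0 := by
  simp [PEquiv.toMatrix_apply, Equiv.eq_symm_apply, eq_comm]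

lemma linftyOpNorm_kronecker_permMatrixHom_le (A : Matrix ι ι ℂ) (σ : Equiv.Perm κ) :
    ‖A ⊗ₖ (permMatrixHom σ : Matrix κ κ ℂ)‖ ≤ ‖A‖ := by
  refine linftyOpNorm_le (norm_nonneg A) fun ⟨i, u⟩ => ?_
  refine le_of_eq_of_le ?_ (sum_norm_row_le_linftyOpNorm A i)
  simp [Fintype.sum_prod_type, apply_ite norm]

lemma entrySum_permMatrixHom_sub_le {k : ℕ} (σ τ : Equiv.Perm (Fin k)) :
    entrySum (permMatrixHom σ - permMatrixHom τ : Matrix _ _ ℂ) ≤ 2 * (permHamming σ τ * k) := by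
  have hcolumn (v : Fin k) :
      ∑ u, ‖(permMatrixHom σ - permMatrixHom τ : Matrix _ _ ℂ) u v‖ ≤
        2 * if σ v ≠ τ v then 1 else 0 := by
    split_ifs with h
    · calc ∑ u, ‖(permMatrixHom σ - permMatrixHom τ : Matrix _ _ ℂ) u v‖
          ≤ ∑ u, ((if u = σ v then 1 else 0) + if u = τ v then 1 else 0) := by
            gcongr with u
            rw [Matrix.sub_apply, permMatrixHom_apply, permMatrixHom_apply]
            refine (norm_sub_le _ _).trans_eq ?_
            simp [apply_ite norm]
        _ = 2 * 1 := by
            rw [Finset.sum_add_distrib, Fintype.sum_ite_eq', Fintype.sum_ite_eq']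
            norm_num
    · simp only [Matrix.sub_apply, permMatrixHom_apply, not_not.1 h, sub_self, norm_zero,
        Finset.sum_const_zero, mul_zero, le_refl]
  calc entrySum (permMatrixHom σ - permMatrixHom τ : Matrix _ _ ℂ)
      = ∑ v, ∑ u, ‖(permMatrixHom σ - permMatrixHom τ : Matrix _ _ ℂ) u v‖ := Finset.sum_comm
    _ ≤ ∑ v, 2 * if σ v ≠ τ v then 1 else 0 := Finset.sum_le_sum fun v _ => hcolumn v
    _ = 2 * (permHamming σ τ * k) := by
        rw [← Finset.mul_sum, ← Finset.natCast_card_filter, permHamming]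
        rcases k.eq_zero_or_pos with rfl | hk
        · simp
        · rw [div_mul_cancel₀ _ (by positivity)]

end EntrySum

section SoficApproximation

variable {Γ : Type*} [Group Γ]

/-- Maps from `Γ` to finite symmetric groups witnessing that `Γ` is sofic. -/
structure IsSoficApproximation {k : ℕ → ℕ} (f : ∀ m, Γ → Equiv.Perm (Fin (k m))) : Prop where
  pos : ∀ m, 0 < k m
  tendsto_mul : ∀ g h : Γ,
    Tendsto (fun m => permHamming (f m g * f m h) (f m (g * h))) atTop (𝓝 0)
  tendsto_one : ∀ g : Γ, g ≠ 1 → Tendsto (fun m => permHamming (f m g) 1) atTop (𝓝 1)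

lemma permHamming_nonneg {k : ℕ} (σ τ : Equiv.Perm (Fin k)) : 0 ≤ permHamming σ τ := by
  unfold permHamming
  positivity

lemma permHamming_comm {k : ℕ} (σ τ : Equiv.Perm (Fin k)) :
    permHamming σ τ = permHamming τ σ := by
  simp only [permHamming, ne_comm]

lemma permHamming_mul_left {k : ℕ} (ρ σ τ : Equiv.Perm (Fin k)) :
    permHamming (ρ * σ) (ρ * τ) = permHamming σ τ := by
  simp [permHamming]

lemma permHamming_triangle {k : ℕ} (ρ σ τ : Equiv.Perm (Fin k)) :
    permHamming ρ τ ≤ permHamming ρ σ + permHamming σ τ := by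
  simp only [permHamming, ← add_div, Finset.natCast_card_filter, ← Finset.sum_add_distrib]
  gcongr with x
  grind

lemma trace_permMatrixHom_div {k : ℕ} (hk : 0 < k) (σ : Equiv.Perm (Fin k)) :
    (permMatrixHom σ : Matrix (Fin k) (Fin k) ℂ).trace / k = (1 - permHamming σ 1 : ℝ) := by
  have htrace : (permMatrixHom σ : Matrix (Fin k) (Fin k) ℂ).trace =
      Finset.card {x | x = σ x} := by
    simp only [trace, diag_apply, permMatrixHom_apply, Finset.natCast_card_filter]
  have hcard : (Finset.card {x | x = σ x} : ℂ) + Finset.card {x | σ x ≠ x} = k := by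
    have hcompl := Finset.card_filter_add_card_filter_not (s := Finset.univ) fun x => x = σ x
    simp only [Finset.card_univ, Fintype.card_fin, eq_comm (b := σ _)] at hcompl ⊢
    exact_mod_cast hcompl
  have hk' : (k : ℂ) ≠ 0 := Nat.cast_ne_zero.2 hk.ne'
  rw [htrace, permHamming, div_eq_iff hk']
  push_cast
  rw [sub_mul, div_mul_cancel₀ _ hk', one_mul]
  exact eq_sub_of_add_eq hcard

namespace IsSoficApproximation

variable {k : ℕ → ℕ} {f : ∀ m, Γ → Equiv.Perm (Fin (k m))}

lemma tendsto_map_one (hf : IsSoficApproximation f) :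
    Tendsto (fun m => permHamming (f m 1) 1) atTop (𝓝 0) := by
  refine (hf.tendsto_mul 1 1).congr fun m => ?_
  rw [one_mul, ← permHamming_mul_left (f m 1) (f m 1), mul_one]

lemma tendsto_map_inv (hf : IsSoficApproximation f) (g : Γ) :
    Tendsto (fun m => permHamming (f m g)⁻¹ (f m g⁻¹)) atTop (𝓝 0) := by
  have hmul := hf.tendsto_mul g g⁻¹
  rw [mul_inv_cancel] at hmul
  refine squeeze_zero (fun m => permHamming_nonneg _ _) (fun m => ?_)
    (by simpa using hmul.add hf.tendsto_map_one)
  rw [← permHamming_mul_left (f m g), mul_inv_cancel, permHamming_comm]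
  exact permHamming_triangle _ _ _

lemma tendsto_trace_permMatrixHom [DecidableEq Γ] (hf : IsSoficApproximation f) (g : Γ) :
    Tendsto (fun m => (permMatrixHom (f m g) : Matrix _ _ ℂ).trace / k m) atTop
      (𝓝 (if g = 1 then 1 else 0)) := by
  have hlim : Tendsto (fun m => 1 - permHamming (f m g) 1) atTop (𝓝 (if g = 1 then 1 else 0)) := by
    split_ifs with hg
    · simpa [hg] using hf.tendsto_map_one.const_sub 1
    · simpa using (hf.tendsto_one g hg).const_sub 1
  simpa only [trace_permMatrixHom_div (hf.pos _), Function.comp_def, apply_ite Complex.ofReal,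
    Complex.ofReal_one, Complex.ofReal_zero] using (Complex.continuous_ofReal.tendsto _).comp hlim

end IsSoficApproximation

end SoficApproximation

section AsymptoticMultiplicativity

attribute [local instance] Matrix.linftyOpNormedAddCommGroup

open scoped Kronecker

/-- A sequence of matrices is negligible, relative to the sizes `k m`, if the sums of the absolute
values of their entries are `o(k m)`. -/
def IsNegligible (k : ℕ → ℕ) {ι : ℕ → Type*} [∀ m, Fintype (ι m)]
    (X : ∀ m, Matrix (ι m) (ι m) ℂ) : Prop :=
  Tendsto (fun m => entrySum (X m) / k m) atTop (𝓝 0)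

namespace IsNegligible

variable {k : ℕ → ℕ} {ι : ℕ → Type*} [∀ m, Fintype (ι m)] {X Y : ∀ m, Matrix (ι m) (ι m) ℂ}

lemma of_le {c : ℕ → ℝ} (hc : Tendsto (fun m => c m / k m) atTop (𝓝 0))
    (hX : ∀ m, entrySum (X m) ≤ c m) : IsNegligible k X :=
  squeeze_zero (fun _ => div_nonneg (entrySum_nonneg _) (Nat.cast_nonneg _))
    (fun m => div_le_div_of_nonneg_right (hX m) (Nat.cast_nonneg _)) hc

lemma zero : IsNegligible k (ι := ι) fun _ => 0 := by
  simp [IsNegligible, entrySum]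

lemma add (hX : IsNegligible k X) (hY : IsNegligible k Y) :
    IsNegligible k fun m => X m + Y m :=
  of_le (by simpa only [add_div, add_zero] using Tendsto.add hX hY) fun m => entrySum_add_le _ _

lemma mul_right (hX : IsNegligible k X) {C : ℝ} (hY : ∀ m, ‖Y m‖ ≤ C) :
    IsNegligible k fun m => X m * Y m :=
  of_le (c := fun m => entrySum (X m) * C)
    (by simpa only [mul_div_right_comm, zero_mul] using Tendsto.mul_const C hX) fun m =>
    (entrySum_mul_le _ _).trans (mul_le_mul_of_nonneg_left (hY m) (entrySum_nonneg _))

lemma mul_left (hY : IsNegligible k Y) {C : ℝ} (hX : ∀ m, ‖(X m)ᵀ‖ ≤ C) :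
    IsNegligible k fun m => X m * Y m :=
  of_le (c := fun m => C * entrySum (Y m))
    (by simpa only [mul_div_assoc, mul_zero] using Tendsto.const_mul C hY) fun m =>
    (entrySum_mul_le' _ _).trans (mul_le_mul_of_nonneg_right (hX m) (entrySum_nonneg _))

lemma tendsto_trace (hX : IsNegligible k X) :
    Tendsto (fun m => (X m).trace / k m) atTop (𝓝 0) :=
  squeeze_zero_norm (fun m => by
    rw [norm_div, Complex.norm_natCast]
    exact div_le_div_of_nonneg_right (norm_trace_le_entrySum _) (Nat.cast_nonneg _)) hX

lemma kronecker_permMatrixHom_sub {ι : Type*} [Fintype ι] (A : Matrix ι ι ℂ)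
    {σ τ : ∀ m, Equiv.Perm (Fin (k m))}
    (h : Tendsto (fun m => permHamming (σ m) (τ m)) atTop (𝓝 0)) :
    IsNegligible k fun m => A ⊗ₖ (permMatrixHom (σ m) - permMatrixHom (τ m)) := by
  have hlim : Tendsto (fun m => entrySum A * (2 * permHamming (σ m) (τ m))) atTop (𝓝 0) := by
    simpa only [mul_zero] using (h.const_mul 2).const_mul (entrySum A)
  refine squeeze_zero (fun m => div_nonneg (entrySum_nonneg _) (Nat.cast_nonneg _)) (fun m => ?_)
    hlim
  refine div_le_of_le_mul₀ (Nat.cast_nonneg _)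
    (by have := entrySum_nonneg A; have := permHamming_nonneg (σ m) (τ m); positivity) ?_
  rw [entrySum_kronecker, mul_assoc, mul_assoc]
  exact mul_le_mul_of_nonneg_left (entrySum_permMatrixHom_sub_le _ _) (entrySum_nonneg _)

end IsNegligible

lemma kronecker_sub {R ι κ : Type*} [NonUnitalNonAssocRing R] (A : Matrix ι ι R)
    (B C : Matrix κ κ R) : A ⊗ₖ (B - C) = A ⊗ₖ B - A ⊗ₖ C := by
  ext ⟨i, u⟩ ⟨j, v⟩
  exact mul_sub _ _ _

variable {Γ ι : Type*} [Fintype ι]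

lemma exists_linftyOpNorm_blockPerm_le (a : Matrix ι ι (MonoidAlgebra ℂ Γ)) :
    ∃ C : ℝ, ∀ (k : ℕ) (f : Γ → Equiv.Perm (Fin k)),
      ‖blockPerm f a‖ ≤ C ∧ ‖(blockPerm f a)ᵀ‖ ≤ C := by
  induction a using induction_map_single with
  | zero => exact ⟨0, fun k f => by simp⟩
  | add a b ha hb =>
    obtain ⟨C, hC⟩ := ha
    obtain ⟨D, hD⟩ := hb
    refine ⟨C + D, fun k f => ?_⟩
    rw [map_add, transpose_add]
    exact ⟨norm_add_le_of_le (hC k f).1 (hD k f).1, norm_add_le_of_le (hC k f).2 (hD k f).2⟩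
  | map_single g A =>
    refine ⟨max ‖A‖ ‖Aᵀ‖, fun k f => ?_⟩
    have htranspose : (A ⊗ₖ (permMatrixHom (f g) : Matrix _ _ ℂ))ᵀ =
        Aᵀ ⊗ₖ permMatrixHom (f g)⁻¹ := by
      rw [← kroneckerMap_transpose]
      simp
    rw [blockPerm_map_single, htranspose]
    exact ⟨(linftyOpNorm_kronecker_permMatrixHom_le _ _).trans (le_max_left _ _),
      (linftyOpNorm_kronecker_permMatrixHom_le _ _).trans (le_max_right _ _)⟩

variable [Group Γ]

namespace IsSoficApproximation

variable {k : ℕ → ℕ} {f : ∀ m, Γ → Equiv.Perm (Fin (k m))}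

lemma isNegligible_one_sub [DecidableEq ι] (hf : IsSoficApproximation f) :
    IsNegligible k fun m => 1 - blockPerm (f m) (1 : Matrix ι ι (MonoidAlgebra ℂ Γ)) := by
  have hone : (1 : Matrix ι ι (MonoidAlgebra ℂ Γ)) = (1 : Matrix ι ι ℂ).map (.single 1) := by
    rw [Matrix.map_one _ (MonoidAlgebra.single_zero 1) rfl]
  convert IsNegligible.kronecker_permMatrixHom_sub (1 : Matrix ι ι ℂ) (τ := fun m => f m 1)
    (σ := fun m => 1) (by simpa only [permHamming_comm] using hf.tendsto_map_one) using 2 with m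
  rw [hone, blockPerm_map_single, map_one, kronecker_sub, one_kronecker_one]

lemma isNegligible_conjTranspose_sub (hf : IsSoficApproximation f)
    (a : Matrix ι ι (MonoidAlgebra ℂ Γ)) :
    IsNegligible k fun m => (blockPerm (f m) a)ᴴ - blockPerm (f m) (groupAdjoint a) := by
  induction a using induction_map_single with
  | zero => simpa using IsNegligible.zero
  | add a b ha hb => simpa only [map_add, conjTranspose_add, add_sub_add_comm] using ha.add hb
  | map_single g A =>
    convert IsNegligible.kronecker_permMatrixHom_sub Aᴴ (hf.tendsto_map_inv g) using 2 with m
    rw [groupAdjoint_map_single, blockPerm_map_single, blockPerm_map_single,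
      conjTranspose_kronecker, kronecker_sub]
    simp

lemma isNegligible_mul_sub (hf : IsSoficApproximation f)
    (a b : Matrix ι ι (MonoidAlgebra ℂ Γ)) :
    IsNegligible k fun m => blockPerm (f m) a * blockPerm (f m) b - blockPerm (f m) (a * b) := by
  induction a using induction_map_single with
  | zero => simpa using IsNegligible.zero
  | add a a' ha ha' => simpa only [map_add, add_mul, add_sub_add_comm] using ha.add ha'
  | map_single g A =>
    induction b using induction_map_single with
    | zero => simpa using IsNegligible.zero
    | add b b' hb hb' => simpa only [map_add, mul_add, add_sub_add_comm] using hb.add hb'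
    | map_single h B =>
      convert IsNegligible.kronecker_permMatrixHom_sub (A * B) (hf.tendsto_mul g h) using 2 with m
      rw [map_single_mul_map_single, blockPerm_map_single, blockPerm_map_single,
        blockPerm_map_single, ← mul_kronecker_mul, ← map_mul, kronecker_sub]

lemma tendsto_trace_blockPerm (hf : IsSoficApproximation f)
    (a : Matrix ι ι (MonoidAlgebra ℂ Γ)) :
    Tendsto (fun m => (blockPerm (f m) a).trace / k m) atTop (𝓝 (a.trace.coeff 1)) := by
  classical
  induction a using induction_map_single with
  | zero => simp
  | add a b ha hb =>
    simpa only [map_add, trace_add, add_div, MonoidAlgebra.coeff_add, Finsupp.add_apply]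
      using ha.add hb
  | map_single g A =>
    have hcoeff : (A.map (MonoidAlgebra.single g)).trace.coeff 1 =
        A.trace * if g = 1 then 1 else 0 := by
      have htrace : (A.map (MonoidAlgebra.single g)).trace = MonoidAlgebra.single g A.trace :=
        (map_sum (MonoidAlgebra.singleAddHom g) _ _).symm
      rw [htrace, MonoidAlgebra.coeff_single, Finsupp.single_apply, mul_ite, mul_one, mul_zero]
    simpa only [hcoeff, blockPerm_map_single, trace_kronecker, mul_div_assoc] using
      (hf.tendsto_trace_permMatrixHom g).const_mul A.trace

lemma isNegligible_pow_sub [DecidableEq ι] (hf : IsSoficApproximation f)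
    {b : Matrix ι ι (MonoidAlgebra ℂ Γ)}
    {X : ∀ m, Matrix (ι × Fin (k m)) (ι × Fin (k m)) ℂ}
    (hXb : IsNegligible k fun m => X m - blockPerm (f m) b) {C : ℝ} (hX : ∀ m, ‖X m‖ ≤ C) (l : ℕ) :
    IsNegligible k fun m => X m ^ l - blockPerm (f m) (b ^ l) := by
  induction l with
  | zero => simpa only [pow_zero] using hf.isNegligible_one_sub
  | succ l ih =>
    obtain ⟨D, hD⟩ := exists_linftyOpNorm_blockPerm_le (b ^ l)
    convert ((ih.mul_right hX).add (hXb.mul_left fun m => (hD _ (f m)).2)).add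
      (hf.isNegligible_mul_sub (b ^ l) b) using 2 with m
    rw [pow_succ, pow_succ]
    noncomm_ring

lemma isNegligible_conjTranspose_mul_self_sub (hf : IsSoficApproximation f)
    (a : Matrix ι ι (MonoidAlgebra ℂ Γ)) :
    IsNegligible k fun m =>
      (blockPerm (f m) a)ᴴ * blockPerm (f m) a - blockPerm (f m) (groupAdjoint a * a) := by
  obtain ⟨C, hC⟩ := exists_linftyOpNorm_blockPerm_le a
  convert ((hf.isNegligible_conjTranspose_sub a).mul_right fun m => (hC _ (f m)).1).add
    (hf.isNegligible_mul_sub (groupAdjoint a) a) using 2 with m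
  noncomm_ring

lemma tendsto_trace_pow [DecidableEq ι] (hf : IsSoficApproximation f)
    {b : Matrix ι ι (MonoidAlgebra ℂ Γ)}
    {X : ∀ m, Matrix (ι × Fin (k m)) (ι × Fin (k m)) ℂ}
    (hXb : IsNegligible k fun m => X m - blockPerm (f m) b) {C : ℝ} (hX : ∀ m, ‖X m‖ ≤ C) (l : ℕ) :
    Tendsto (fun m => (X m ^ l).trace / k m) atTop (𝓝 ((b ^ l).trace.coeff 1)) := by
  simpa only [trace_sub, sub_div, sub_add_cancel, zero_add] using
    (hf.isNegligible_pow_sub hXb hX l).tendsto_trace.add (hf.tendsto_trace_blockPerm (b ^ l))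

end IsSoficApproximation

end AsymptoticMultiplicativity

section GroupRingRepresentation

variable {Γ : Type*} [Group Γ] {n : ℕ}

lemma inner_π_eq_coeff_one (R : GNSRep Γ (canonicalTrace Γ)) (x : MonoidAlgebra ℂ Γ) :
    inner ℂ R.ξ (R.π x R.ξ) = x.coeff 1 := by
  induction x using MonoidAlgebra.induction_on with
  | of g =>
    classical
    rw [R.inner_eq]
    simp only [canonicalTrace, MonoidAlgebra.of_apply, MonoidAlgebra.coeff_single,
      Finsupp.single_apply]
  | add x y hx hy => simp [hx, hy]
  | smul r x hx => simp [hx]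

lemma vec_apply {φ : Γ → ℂ} (R : GNSRep Γ φ) (i j : Fin n) :
    R.vec i j = if i = j then R.ξ else 0 := by
  simp [GNSRep.vec, eq_comm]

lemma reTrace_matAct (R : GNSRep Γ (canonicalTrace Γ))
    (a : Matrix (Fin n) (Fin n) (MonoidAlgebra ℂ Γ)) :
    reTrace R (matAct R.π a) = (a.trace.coeff 1).re := by
  have hentry (i : Fin n) : inner ℂ (R.vec i) (matAct R.π a (R.vec i)) = (a i i).coeff 1 := by
    rw [← inner_π_eq_coeff_one R, PiLp.inner_apply,
      Finset.sum_eq_single i (fun l _ hl => by simp [vec_apply, hl.symm]) (by simp)]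
    simp [matAct_apply, vec_apply, apply_ite]
  simp [reTrace_apply, hentry, trace]

lemma star_matAct_eq_groupAdjoint {φ : Γ → ℂ} (R : GNSRep Γ φ)
    (a : Matrix (Fin n) (Fin n) (MonoidAlgebra ℂ Γ)) :
    star (matAct R.π a) = matAct R.π (groupAdjoint a) := by
  refine star_matAct R.π fun i j => ?_
  induction a using induction_map_single with
  | zero => simp
  | add a b ha hb => simp [ha, hb]
  | map_single g A =>
    rw [groupAdjoint_map_single, Matrix.map_apply, Matrix.map_apply, ← MonoidAlgebra.smul_of,
      ← MonoidAlgebra.smul_of, map_smul, map_smul, star_smul, R.star_of, conjTranspose_apply]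

lemma reTrace_star_mul_self_pow (R : GNSRep Γ (canonicalTrace Γ))
    (a : Matrix (Fin n) (Fin n) (MonoidAlgebra ℂ Γ)) (l : ℕ) :
    reTrace R ((star (matAct R.π a) * matAct R.π a) ^ l) =
      (((groupAdjoint a * a) ^ l).trace.coeff 1).re := by
  rw [star_matAct_eq_groupAdjoint, ← matAct_mul, ← matAct_pow, reTrace_matAct]

end GroupRingRepresentation

section IntegralCoefficients

open scoped NumberField

attribute [local instance] Matrix.linftyOpNormedRing

variable {Γ ι : Type*}

lemma exists_map_mapRingHom_eq [Monoid Γ] {R S : Type*} [Semiring R] [Semiring S] (φ : R →+* S)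
    (a : Matrix ι ι (MonoidAlgebra S Γ)) (ha : ∀ i j g, (a i j).coeff g ∈ Set.range φ) :
    ∃ b : Matrix ι ι (MonoidAlgebra R Γ), b.map (MonoidAlgebra.mapRingHom Γ φ) = a := by
  have hentry (i j : ι) : a i j ∈ (MonoidAlgebra.mapRingHom Γ φ).rangeS := by
    rw [← MonoidAlgebra.sum_coeff_single (a i j)]
    refine sum_mem fun g _ => ?_
    obtain ⟨r, hr⟩ := ha i j g
    exact ⟨MonoidAlgebra.single g r, by simp [hr]⟩
  choose b hb using hentry
  exact ⟨Matrix.of b, by ext1 i j; exact hb i j⟩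

lemma exists_numberField_lift {s : Set ℂ} (hs : s.Finite) (hint : ∀ z ∈ s, IsIntegral ℤ z) :
    ∃ (E : Type) (_ : Field E) (_ : NumberField E) (J : E →+* ℂ),
      ∀ z ∈ s, z ∈ Set.range (J.comp (algebraMap (𝓞 E) E)) := by
  have := hs.to_subtype
  have := IntermediateField.finiteDimensional_adjoin (K := ℚ) fun z hz => (hint z hz).tower_top
  refine ⟨IntermediateField.adjoin ℚ s, inferInstance, ⟨⟩,
    (IntermediateField.adjoin ℚ s).val.toRingHom, fun z hz => ?_⟩
  have hmem : z ∈ IntermediateField.adjoin ℚ s := IntermediateField.subset_adjoin ℚ s hz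
  exact ⟨⟨⟨z, hmem⟩, (isIntegral_algHom_iff ((IntermediateField.adjoin ℚ s).val.restrictScalars ℤ)
    Subtype.val_injective).1 (hint z hz)⟩, rfl⟩

lemma finite_iUnion_range_coeff [Finite ι] {R : Type*} [Semiring R]
    (a : Matrix ι ι (MonoidAlgebra R Γ)) : (⋃ i, ⋃ j, Set.range (a i j).coeff).Finite :=
  Set.finite_iUnion fun i => Set.finite_iUnion fun j => Finsupp.finite_range (a i j).coeff

lemma exists_conj_pair_lift [Finite ι] [Monoid Γ] (a : Matrix ι ι (MonoidAlgebra ℂ Γ))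
    (ha : ∀ i j g, IsIntegral ℤ ((a i j).coeff g)) :
    ∃ (E : Type) (_ : Field E) (_ : NumberField E) (J : E →+* ℂ)
      (b b' : Matrix ι ι (MonoidAlgebra (𝓞 E) Γ)),
      b.map (MonoidAlgebra.mapRingHom Γ (J.comp (algebraMap (𝓞 E) E))) = a ∧
      b'.map (MonoidAlgebra.mapRingHom Γ (J.comp (algebraMap (𝓞 E) E))) =
        a.map (MonoidAlgebra.mapRingHom Γ (starRingEnd ℂ)) := by
  set a' := a.map (MonoidAlgebra.mapRingHom Γ (starRingEnd ℂ)) with ha'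
  have ha'_int (i j : ι) (g : Γ) : IsIntegral ℤ ((a' i j).coeff g) := by
    simpa [ha'] using (ha i j g).map (Complex.conjAe.restrictScalars ℤ)
  obtain ⟨E, _, _, J, hJ⟩ := exists_numberField_lift
    ((finite_iUnion_range_coeff a).union (finite_iUnion_range_coeff a')) (by
      simp only [Set.mem_union, Set.mem_iUnion, Set.mem_range]
      rintro _ (⟨i, j, g, rfl⟩ | ⟨i, j, g, rfl⟩)
      exacts [ha i j g, ha'_int i j g])
  obtain ⟨b, hb⟩ := exists_map_mapRingHom_eq _ a fun i j g => hJ _ <|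
    Or.inl <| Set.mem_iUnion₂.2 ⟨i, j, g, rfl⟩
  obtain ⟨b', hb'⟩ := exists_map_mapRingHom_eq _ a' fun i j g => hJ _ <|
    Or.inr <| Set.mem_iUnion₂.2 ⟨i, j, g, rfl⟩
  exact ⟨E, _, ‹_›, J, b, b', hb, hb'⟩

lemma conjTranspose_blockPerm [Finite ι] [Monoid Γ] {κ : Type*} [Fintype κ] [DecidableEq κ]
    (f : Γ → Equiv.Perm κ) (a : Matrix ι ι (MonoidAlgebra ℂ Γ)) :
    (blockPerm f a)ᴴ = (blockPerm f (a.map (MonoidAlgebra.mapRingHom Γ (starRingEnd ℂ))))ᵀ := by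
  rw [← map_blockPerm]
  rfl

variable [Fintype ι] [DecidableEq ι]

lemma exists_linftyOpNorm_transpose_mul_le (a b : Matrix ι ι (MonoidAlgebra ℂ Γ)) :
    ∃ C : ℝ, ∀ (k : ℕ) (f : Γ → Equiv.Perm (Fin k)),
      ‖(blockPerm f a)ᵀ * blockPerm f b‖ ≤ C := by
  obtain ⟨C, hC⟩ := exists_linftyOpNorm_blockPerm_le a
  obtain ⟨D, hD⟩ := exists_linftyOpNorm_blockPerm_le b
  refine ⟨C * D, fun k f => (Matrix.linfty_opNorm_mul _ _).trans ?_⟩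
  exact mul_le_mul (hC k f).2 (hD k f).1 (norm_nonneg _) ((norm_nonneg _).trans (hC k f).2)

/-- The squares of the singular values of `blockPerm f a`, with multiplicity. -/
def sqSingularValues {κ : Type*} [Fintype κ] [DecidableEq κ] (f : Γ → Equiv.Perm κ)
    (a : Matrix ι ι (MonoidAlgebra ℂ Γ)) : ι × κ → ℝ :=
  (isHermitian_conjTranspose_mul_self (blockPerm f a)).eigenvalues

lemma sqSingularValues_nonneg {κ : Type*} [Fintype κ] [DecidableEq κ] (f : Γ → Equiv.Perm κ)
    (a : Matrix ι ι (MonoidAlgebra ℂ Γ)) (i : ι × κ) : 0 ≤ sqSingularValues f a i :=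
  eigenvalues_conjTranspose_mul_self_nonneg _ i

variable [Monoid Γ]

lemma exists_abs_sqSingularValues_le (a : Matrix ι ι (MonoidAlgebra ℂ Γ)) :
    ∃ C : ℝ, ∀ (k : ℕ) (f : Γ → Equiv.Perm (Fin k)) (i : ι × Fin k),
      |sqSingularValues f a i| ≤ C := by
  obtain ⟨C, hC⟩ := exists_linftyOpNorm_transpose_mul_le
    (a.map (MonoidAlgebra.mapRingHom Γ (starRingEnd ℂ))) a
  refine ⟨C, fun k f i => (abs_eigenvalues_le_linftyOpNorm _ i).trans ?_⟩
  rw [conjTranspose_blockPerm]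
  exact hC k f

lemma exists_one_le_prod_sqSingularValues_mul (a : Matrix ι ι (MonoidAlgebra ℂ Γ))
    (ha : ∀ i j g, IsIntegral ℤ ((a i j).coeff g)) :
    ∃ (M : ℝ) (d : ℕ), 1 ≤ M ∧ ∀ (k : ℕ) (f : Γ → Equiv.Perm (Fin k)),
      1 ≤ (∏ i with sqSingularValues f a i ≠ 0, |sqSingularValues f a i|) *
        ((2 * M) ^ Fintype.card (ι × Fin k)) ^ d := by
  obtain ⟨E, _, _, J, b, b', hb, hb'⟩ := exists_conj_pair_lift a ha
  have hmap (σ : 𝓞 E →+* ℂ) {k : ℕ} (f : Γ → Equiv.Perm (Fin k)) :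
      ((blockPerm f b')ᵀ * blockPerm f b).map σ =
        (blockPerm f (b'.map (MonoidAlgebra.mapRingHom Γ σ)))ᵀ *
          blockPerm f (b.map (MonoidAlgebra.mapRingHom Γ σ)) := by
    rw [Matrix.map_mul, transpose_map, map_blockPerm, map_blockPerm]
  choose C hC using fun σ : E →+* ℂ => exists_linftyOpNorm_transpose_mul_le
    (b'.map (MonoidAlgebra.mapRingHom Γ (σ.comp (algebraMap (𝓞 E) E))))
    (b.map (MonoidAlgebra.mapRingHom Γ (σ.comp (algebraMap (𝓞 E) E))))
  obtain ⟨M, hM⟩ := Finite.exists_le C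
  refine ⟨max 1 M, Module.finrank ℚ E, le_max_left _ _, fun k f => ?_⟩
  have hgram : ((blockPerm f b')ᵀ * blockPerm f b).map (J.comp (algebraMap (𝓞 E) E)) =
      (blockPerm f a)ᴴ * blockPerm f a := by
    rw [hmap, hb, hb', conjTranspose_blockPerm]
  have hprod {X : Matrix (ι × Fin k) (ι × Fin k) ℂ} (hX : X.IsHermitian)
      (h : ((blockPerm f b')ᵀ * blockPerm f b).map (J.comp (algebraMap (𝓞 E) E)) = X) :
      1 ≤ (∏ i with hX.eigenvalues i ≠ 0, |hX.eigenvalues i|) *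
        ((2 * max 1 M) ^ Fintype.card (ι × Fin k)) ^ Module.finrank ℚ E := by
    subst h
    refine one_le_prod_abs_eigenvalues_mul J _ hX (le_max_left _ _) fun σ => ?_
    rw [hmap]
    exact ((hC σ k f).trans (hM σ)).trans (le_max_right _ _)
  exact hprod _ hgram

lemma exists_card_small_sqSingularValues_le (a : Matrix ι ι (MonoidAlgebra ℂ Γ))
    (ha : ∀ i j g, IsIntegral ℤ ((a i j).coeff g)) {δ : ℝ} (hδ : 0 < δ) :
    ∃ ε > 0, ∀ (k : ℕ) (f : Γ → Equiv.Perm (Fin k)),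
      (Finset.card {i | sqSingularValues f a i ≠ 0 ∧ sqSingularValues f a i < ε} : ℝ) ≤
        δ * k := by
  obtain ⟨M, d, hM, hprod⟩ := exists_one_le_prod_sqSingularValues_mul a ha
  obtain ⟨C, hC⟩ := exists_abs_sqSingularValues_le a
  set L := Fintype.card ι * (d * Real.log (2 * M) + Real.log (max 1 C)) with hL
  have hL₀ : 0 ≤ L := by
    have := Real.log_nonneg (by linarith : 1 ≤ 2 * M)
    have := Real.log_nonneg (le_max_left 1 C)
    positivity
  refine ⟨Real.exp (-((L + 1) / δ)), Real.exp_pos _, fun k f => ?_⟩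
  have hcard := card_small_mul_neg_log_le (le_max_left 1 C)
    (fun i => (hC k f i).trans (le_max_right _ _)) (by positivity) (hprod k f)
    (Real.exp_pos (-((L + 1) / δ)))
  rw [Real.log_exp, neg_neg, Real.log_pow, Real.log_pow, Fintype.card_prod, Fintype.card_fin,
    Nat.cast_mul] at hcard
  have habs (i : ι × Fin k) : |sqSingularValues f a i| = sqSingularValues f a i :=
    abs_of_nonneg (sqSingularValues_nonneg f a i)
  simp only [habs] at hcard
  refine le_of_mul_le_mul_right (hcard.trans ?_) (by positivity : 0 < (L + 1) / δ)
  calc (d * (Fintype.card ι * k * Real.log (2 * M)) +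
        Fintype.card ι * k * Real.log (max 1 C) : ℝ) = k * L := by rw [hL]; ring
    _ ≤ k * (L + 1) := by gcongr; linarith
    _ = δ * k * ((L + 1) / δ) := by field_simp

end IntegralCoefficients

section NormalizedRank

attribute [local instance] Matrix.linftyOpNormedRing

lemma re_trace_pow_eq_sum_eigenvalues {ι : Type*} [Fintype ι] [DecidableEq ι] {B : Matrix ι ι ℂ}
    (hB : B.IsHermitian) (l : ℕ) : (B ^ l).trace.re = ∑ i, hB.eigenvalues i ^ l := by
  conv_lhs => rw [hB.spectral_theorem]
  rw [← map_pow, Unitary.conjStarAlgAut_apply, Matrix.trace_mul_comm, ← mul_assoc,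
    Unitary.coe_star_mul_self, one_mul, Matrix.diagonal_pow, Matrix.trace_diagonal]
  simp [← Complex.ofReal_pow]

lemma rank_map {K L : Type*} [Field K] [Field L] {ι : Type*} [Fintype ι]
    (j : K →+* L) (A : Matrix ι ι K) : (A.map j).rank = A.rank := by
  classical
  obtain ⟨P, Q, D, hPAQ⟩ := Matrix.Pivot.exists_list_transvec_mul_mul_list_transvec_eq_diagonal A
  set p := (P.map TransvectionStruct.toMatrix).prod
  set q := (Q.map TransvectionStruct.toMatrix).prod
  have hp : IsUnit p.det := by simp [p]
  have hq : IsUnit q.det := by simp [q]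
  have hpj : IsUnit (p.map j).det := by
    simpa only [RingHom.map_det, RingHom.mapMatrix_apply] using hp.map j
  have hqj : IsUnit (q.map j).det := by
    simpa only [RingHom.map_det, RingHom.mapMatrix_apply] using hq.map j
  calc (A.map j).rank = (p.map j * A.map j * q.map j).rank := by
        rw [rank_mul_eq_left_of_isUnit_det _ _ hqj, rank_mul_eq_right_of_isUnit_det _ _ hpj]
    _ = (diagonal fun i => j (D i)).rank := by
        rw [← Matrix.map_mul, ← Matrix.map_mul, hPAQ, diagonal_map (map_zero j)]
    _ = (diagonal D).rank := by simp [rank_diagonal]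
    _ = A.rank := by
        rw [← hPAQ, rank_mul_eq_left_of_isUnit_det _ _ hq, rank_mul_eq_right_of_isUnit_det _ _ hp]

lemma card_sqSingularValues_eq_zero_add_rank {Γ ι κ : Type*} [Fintype ι] [DecidableEq ι]
    [Fintype κ] [DecidableEq κ] (f : Γ → Equiv.Perm κ) (a : Matrix ι ι (MonoidAlgebra ℂ Γ)) :
    Finset.card {i | sqSingularValues f a i = 0} + (blockPerm f a).rank =
      Fintype.card ι * Fintype.card κ := by
  rw [← Matrix.rank_conjTranspose_mul_self, (isHermitian_conjTranspose_mul_self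
    (blockPerm f a)).rank_eq_card_non_zero_eigs, Fintype.card_subtype, ← Fintype.card_prod]
  exact Finset.card_filter_add_card_filter_not _

lemma exists_int_smul_isIntegral {Γ ι K : Type*} [Finite ι] [Field K] [Algebra ℚ K]
    [Algebra.IsAlgebraic ℚ K] (a : Matrix ι ι (MonoidAlgebra K Γ)) :
    ∃ D : ℤ, D ≠ 0 ∧ ∀ i j g, IsIntegral ℤ (((D • a) i j).coeff g) := by
  have := IsLocalization.isAlgebraic (R := ℤ) ℚ (nonZeroDivisors ℤ)
  have := Algebra.IsAlgebraic.trans ℤ ℚ K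
  obtain ⟨D, hD, hint⟩ := Algebra.IsAlgebraic.exists_integral_multiples ℤ
    (finite_iUnion_range_coeff a).toFinset
  refine ⟨D, hD, fun i j g => hint _ ?_⟩
  exact (Set.Finite.mem_toFinset _).2 (Set.mem_iUnion₂.2 ⟨i, j, g, rfl⟩)

namespace IsSoficApproximation

variable {Γ : Type*} [Group Γ] {k : ℕ → ℕ} {f : ∀ m, Γ → Equiv.Perm (Fin (k m))} {n : ℕ}

lemma tendsto_sum_sqSingularValues_pow (hf : IsSoficApproximation f)
    (R : GNSRep Γ (canonicalTrace Γ)) (a : Matrix (Fin n) (Fin n) (MonoidAlgebra ℂ Γ)) (l : ℕ) :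
    Tendsto (fun m => (∑ i, sqSingularValues (f m) a i ^ l) / k m) atTop
      (𝓝 (reTrace R ((star (matAct R.π a) * matAct R.π a) ^ l))) := by
  obtain ⟨C, hC⟩ := exists_linftyOpNorm_transpose_mul_le
    (a.map (MonoidAlgebra.mapRingHom Γ (starRingEnd ℂ))) a
  have htrace := hf.tendsto_trace_pow (hf.isNegligible_conjTranspose_mul_self_sub a)
    (fun m => by rw [conjTranspose_blockPerm]; exact hC _ (f m)) l
  rw [reTrace_star_mul_self_pow]
  refine ((Complex.continuous_re.tendsto _).comp htrace).congr fun m => ?_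
  rw [Function.comp_apply, Complex.div_natCast_re, re_trace_pow_eq_sum_eigenvalues
    (isHermitian_conjTranspose_mul_self _)]
  rfl

lemma tendsto_sum_comp_sqSingularValues (hf : IsSoficApproximation f)
    (R : GNSRep Γ (canonicalTrace Γ)) (a : Matrix (Fin n) (Fin n) (MonoidAlgebra ℂ Γ)) {h : ℝ → ℝ}
    (hh : ContinuousOn h (Set.Ici 0)) :
    Tendsto (fun m => (∑ i, h (sqSingularValues (f m) a i)) / k m) atTop
      (𝓝 (reTrace R (cfc h (star (matAct R.π a) * matAct R.π a)))) := by
  obtain ⟨C, hC⟩ := exists_abs_sqSingularValues_le a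
  set T := star (matAct R.π a) * matAct R.π a
  have hspec : spectrum ℝ T ⊆ Set.Icc 0 (max C (‖T‖ * ‖(1 : _ →L[ℂ] _)‖)) := fun t ht =>
    ⟨spectrum_star_mul_self_nonneg t ht,
      (le_abs_self t).trans ((spectrum.norm_le_norm_mul_of_mem ht).trans (le_max_right _ _))⟩
  exact tendsto_sum_div_cfc (reTrace R) (IsSelfAdjoint.star_mul_self _) hspec
    (fun m i => ⟨sqSingularValues_nonneg (f m) a i,
      (le_abs_self _).trans ((hC _ (f m) i).trans (le_max_left _ _))⟩)
    (fun m => Nat.cast_pos.2 (hf.pos m)) (C := n) (fun m => by simp)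
    (hf.tendsto_sum_sqSingularValues_pow R a) (hh.mono Set.Icc_subset_Ici_self)

theorem tendsto_nullity_of_isIntegral (hf : IsSoficApproximation f)
    (R : GNSRep Γ (canonicalTrace Γ)) (a : Matrix (Fin n) (Fin n) (MonoidAlgebra ℂ Γ))
    (ha : ∀ i j g, IsIntegral ℤ ((a i j).coeff g)) :
    Tendsto (fun m => n - (blockPerm (f m) a).rank / k m : ℕ → ℝ) atTop (𝓝 (R.kerDim a)) := by
  rw [kerDim_eq_sInf]
  refine (tendsto_card_zero_div (fun m => sqSingularValues_nonneg (f m) a)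
    (fun m => Nat.cast_pos.2 (hf.pos m))
    (fun h hh => hf.tendsto_sum_comp_sqSingularValues R a hh) fun δ hδ => ?_).congr fun m => ?_
  · obtain ⟨ε, hε, hcard⟩ := exists_card_small_sqSingularValues_le a ha hδ
    exact ⟨ε, hε, fun m => hcard _ (f m)⟩
  · have hk : (k m : ℝ) ≠ 0 := Nat.cast_ne_zero.2 (hf.pos m).ne'
    have hcard := congrArg (Nat.cast (R := ℝ)) (card_sqSingularValues_eq_zero_add_rank (f m) a)
    rw [Fintype.card_fin, Fintype.card_fin] at hcard
    push_cast at hcard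
    rw [div_eq_iff hk, sub_mul, div_mul_cancel₀ _ hk]
    linarith

theorem tendsto_nullity (hf : IsSoficApproximation f) (R : GNSRep Γ (canonicalTrace Γ))
    {K : Type*} [Field K] [Algebra ℚ K] [Algebra.IsAlgebraic ℚ K]
    (a : Matrix (Fin n) (Fin n) (MonoidAlgebra K Γ)) (j : K →+* ℂ) :
    Tendsto (fun m => n - (blockPerm (f m) a).rank / k m : ℕ → ℝ) atTop
      (𝓝 (R.kerDim (a.map (MonoidAlgebra.mapRingHom Γ j)))) := by
  obtain ⟨D, hD, hint⟩ := exists_int_smul_isIntegral a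
  have hsmul : (D • a).map (MonoidAlgebra.mapRingHom Γ j) =
      (D : ℂ) • a.map (MonoidAlgebra.mapRingHom Γ j) := by
    ext1 p q
    rw [Matrix.map_apply, Matrix.smul_apply, map_zsmul, Matrix.smul_apply, Matrix.map_apply,
      Int.cast_smul_eq_zsmul]
  rw [← kerDim_smul R _ (Int.cast_ne_zero.2 hD), ← hsmul]
  refine (hf.tendsto_nullity_of_isIntegral R _ fun p q g => ?_).congr fun m => ?_
  · exact (hint p q g).map j.toIntAlgHom
  · rw [← map_blockPerm, rank_map, map_zsmul, ← Int.cast_smul_eq_zsmul K,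
      rank_smul_of_mem_nonZeroDivisors]
    have : CharZero K := algebraRat.charZero K
    exact mem_nonZeroDivisors_of_ne_zero (Int.cast_ne_zero.2 hD)

end IsSoficApproximation

end NormalizedRank

end LueckApproximation

theorem stmt18_general {Γ : Type*} [Group Γ] (hΓ : IsSofic Γ) {K : Type*} [Field K] [Algebra ℚ K]
    [Algebra.IsAlgebraic ℚ K] {n : ℕ} (a : Matrix (Fin n) (Fin n) (MonoidAlgebra K Γ))
    (j₁ j₂ : K →+* ℂ) (R : GNSRep Γ (canonicalTrace Γ)) :
    R.kerDim (a.map (MonoidAlgebra.mapRingHom Γ j₁)) =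
      R.kerDim (a.map (MonoidAlgebra.mapRingHom Γ j₂)) := by
  obtain ⟨k, f, hpos, hmul, hone⟩ := hΓ
  have hf : LueckApproximation.IsSoficApproximation f := ⟨hpos, hmul, hone⟩
  exact tendsto_nhds_unique (hf.tendsto_nullity R a j₁) (hf.tendsto_nullity R a j₂)

/-- for a countable sofic group `Γ` and `a ∈ Mₙ(ℚ̄ Γ)`, the von Neumann
dimension (with respect to the canonical trace of `Γ`) of the kernel of `j(a)` is the
same for all field embeddings `j : ℚ̄ → ℂ`. -/
theorem stmt18 {Γ : Type*} [Group Γ] [Countable Γ] (hΓ : IsSofic Γ) (n : ℕ) (hn : 0 < n)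
    (a : Matrix (Fin n) (Fin n) (MonoidAlgebra (AlgebraicClosure ℚ) Γ))
    (j₁ j₂ : AlgebraicClosure ℚ →+* ℂ) :
    ∀ R : GNSRep Γ (canonicalTrace Γ),
      R.kerDim (mapCoeffs j₁ a) = R.kerDim (mapCoeffs j₂ a) :=
  have : Algebra.IsAlgebraic ℚ (AlgebraicClosure ℚ) := AlgebraicClosure.isAlgebraic ℚ
  stmt18_general hΓ a j₁ j₂

end
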